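/- Every primitive word w over a linearly ordered alphabet has exactly one cyclic rotation that is a Galois word; equivalently, in every conjugacy class of primitive words there is a unique ≼_alt-minimal element and it is the unique Galois word of the class. -/

import Mathlib

namespace Paper

variable {α : Type*}

/-- Extended alternating lexicographic strict order; the flag `b` is `true`
when the current position index is even. -/
def altLtAux [LinearOrder α] : Bool → List α → List α → Prop
  | _, [], [] => False
  | b, [], _ :: _ => b = true
  | b, _ :: _, [] => b = false
  | b, c :: x, d :: y => (if b then c < d else d < c) ∨ (c = d ∧ altLtAux (!b) x y)

/-- The alternating lexicographic strict order (positions indexed from 0). -/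
def AltLt [LinearOrder α] (x y : List α) : Prop := altLtAux true x y

/-- The reflexive alternating lexicographic order. -/
def AltLe [LinearOrder α] (x y : List α) : Prop := x = y ∨ AltLt x y

/-- A word is primitive if its cyclic rotations are pairwise distinct. -/
def Primitive (w : List α) : Prop :=
  ∀ i j, i < w.length → j < w.length → w.rotate i = w.rotate j → i = j


/-- A primitive word `w` is a Galois word if `w ≼_alt vu` for every nontrivial
factorization `w = uv`. -/
def IsGalois [LinearOrder α] (w : List α) : Prop :=
  Primitive w ∧ ∀ u v : List α, w = u ++ v → u ≠ [] → v ≠ [] → AltLe w (v ++ u)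
theorem altLtAux_irrefl [LinearOrder α] (x : List α) : ∀ b, ¬ altLtAux b x x := by
  induction x with
  | nil => intro b h; simp [altLtAux] at h
  | cons c x ih =>
    intro b h
    cases b <;> simp [altLtAux] at h <;> exact ih _ h

theorem altLtAux_trans [LinearOrder α] (x : List α) :
    ∀ b y z, altLtAux b x y → altLtAux b y z → altLtAux b x z := by
  induction x with
  | nil =>
    intro b y z h1 h2
    cases y <;> cases z <;> cases b <;> simp_all [altLtAux]
  | cons c x ih =>
    intro b y z h1 h2
    cases y with
    | nil => cases z <;> cases b <;> simp_all [altLtAux]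
    | cons d y =>
      cases z with
      | nil => cases b <;> simp_all [altLtAux]
      | cons e z =>
        have := ih (!b) y z
        cases b <;> simp only [altLtAux, if_true, if_false, Bool.false_eq_true] at * <;>
          rcases h1 with h1 | ⟨rfl, h1⟩ <;> rcases h2 with h2 | ⟨rfl, h2⟩
        · exact Or.inl (h2.trans h1)
        · exact Or.inl h1
        · exact Or.inl h2
        · exact Or.inr ⟨rfl, this h1 h2⟩
        · exact Or.inl (h1.trans h2)
        · exact Or.inl h1
        · exact Or.inl h2
        · exact Or.inr ⟨rfl, this h1 h2⟩

theorem altLtAux_total [LinearOrder α] (x : List α) :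
    ∀ b y, x = y ∨ altLtAux b x y ∨ altLtAux b y x := by
  induction x with
  | nil => intro b y; cases y <;> cases b <;> simp [altLtAux]
  | cons c x ih =>
    intro b y
    cases y with
    | nil => cases b <;> simp [altLtAux]
    | cons d y =>
      have h := ih (!b) y
      rcases lt_trichotomy c d with hc | rfl | hc
      · cases b <;> simp [altLtAux, hc]
      · cases b <;> simpa [altLtAux] using h
      · cases b <;> simp [altLtAux, hc]

theorem AltLe.antisymm' [LinearOrder α] {x y : List α} (h1 : AltLe x y) (h2 : AltLe y x) :
    x = y := by
  rcases h1 with h1 | h1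
  · exact h1
  rcases h2 with h2 | h2
  · exact h2.symm
  exact (altLtAux_irrefl _ _ (altLtAux_trans _ _ _ _ h1 h2)).elim

theorem Primitive.rotate' {w : List α} (h : Primitive w) (k : ℕ) : Primitive (w.rotate k) := by
  intro i j hi hj he
  rw [List.length_rotate] at hi hj
  refine h i j hi hj ?_
  rw [List.rotate_rotate, List.rotate_rotate, Nat.add_comm k, Nat.add_comm k,
    ← List.rotate_rotate, ← List.rotate_rotate] at he
  exact List.rotate_injective k he

theorem IsGalois.le_rotate [LinearOrder α] {w : List α} (h : IsGalois w) (k : ℕ) :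
    AltLe w (w.rotate k) := by
  rw [← List.rotate_mod]
  by_cases hw : w = []
  · subst hw; left; simp
  have hlt := Nat.mod_lt k (List.length_pos_iff.mpr hw)
  generalize k % w.length = m at hlt
  rcases Nat.eq_zero_or_pos m with rfl | hm
  · left; simp
  rw [List.rotate_eq_drop_append_take hlt.le]
  apply h.2 _ _ (List.take_append_drop m w).symm
  · simp [hw]; omega
  · simp; omega

theorem IsGalois.le_rotate_rotate [LinearOrder α] {w : List α} (i j : Fin w.length)
    (h : IsGalois (w.rotate i.val)) : AltLe (w.rotate i.val) (w.rotate j.val) := by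
  have := h.le_rotate (w.length - i.val + j.val)
  rw [List.rotate_rotate, ← Nat.add_assoc, Nat.add_sub_cancel' i.2.le, ← List.rotate_rotate,
    List.rotate_length] at this
  exact this

/-- every nonempty primitive word has exactly one cyclic rotation
that is a Galois word, and that rotation is the ≼_alt-minimal one in the
conjugacy class. -/
theorem exists_unique_galois_rotation [LinearOrder α] (w : List α)
    (hw : w ≠ []) (hprim : Primitive w) :
    (∃! i : Fin w.length, IsGalois (w.rotate i.val)) ∧
      ∀ i j : Fin w.length, IsGalois (w.rotate i.val) →
        AltLe (w.rotate i.val) (w.rotate j.val) := by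
  refine ⟨?_, fun i j h => h.le_rotate_rotate i j⟩
  have hpos := List.length_pos_iff.mpr hw
  let r : Fin w.length → Fin w.length → Prop := fun i j => AltLt (w.rotate i.val) (w.rotate j.val)
  haveI : IsTrans (Fin w.length) r := ⟨fun _ _ _ h1 h2 => altLtAux_trans _ _ _ _ h1 h2⟩
  haveI : Std.Irrefl r := ⟨fun _ h => altLtAux_irrefl _ _ h⟩
  have hwf : WellFounded r := Finite.wellFounded_of_trans_of_irrefl r
  obtain ⟨i, -, hi⟩ := hwf.has_min Set.univ ⟨⟨0, hpos⟩, trivial⟩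
  refine ⟨i, ⟨hprim.rotate' _, ?_⟩, ?_⟩
  · intro u v huv _ _
    have hv : v ++ u = w.rotate ((i.val + u.length) % w.length) := by
      rw [List.rotate_mod, ← List.rotate_rotate, huv, List.rotate_append_length_eq]
    rw [hv]
    have hn := hi ⟨(i.val + u.length) % w.length, Nat.mod_lt _ hpos⟩ trivial
    rcases altLtAux_total (w.rotate i.val) true (w.rotate ((i.val + u.length) % w.length))
      with h | h | h
    · exact Or.inl h
    · exact Or.inr h
    · exact (hn h).elim
  · intro j hj
    have hgi : ∀ k : Fin w.length, AltLe (w.rotate i.val) (w.rotate k.val) := by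
      intro k
      rcases altLtAux_total (w.rotate i.val) true (w.rotate k.val) with h | h | h
      · exact Or.inl h
      · exact Or.inr h
      · exact (hi k trivial h).elim
    exact Fin.ext (hprim _ _ j.2 i.2 ((hj.le_rotate_rotate j i).antisymm' (hgi j)))

end Paper
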